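/- arXiv:2501.18180 — 8 statements merged into one kernel-verified Lean document; each statement's English description precedes it below -/
import Mathlib

section
/- Let (A; *, 0) be an edge d-algebra. Then x * 0 = x for every x in A. -/
/-- Let (A; *, 0) be an edge d-algebra. Then x * 0 = x for every x in A. -/
theorem edge_d_algebra_star_zero {A : Type*} (star : A → A → A) (z : A)
    (hI : ∀ x, star x x = z)
    (hII : ∀ x, star z x = z)
    (hIII : ∀ x y, star x y = z → star y x = z → x = y)
    (hedge : ∀ x, Set.range (star x) = ({x, z} : Set A)) :
    ∀ x, star x z = x := by
  intro x
  have hmem : star x z ∈ ({x, z} : Set A) := hedge x ▸ Set.mem_range_self z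
  rcases hmem with h | h
  · exact h
  · -- Here `x * 0 = 0`, and `0 * x = 0`, so antisymmetry forces `x = 0`.
    have hz : star x z = z := h
    rw [hz]
    exact (hIII x z hz (hII x)).symm
end

section
/- Let (A; *, 0) be a d-transitive edge d-algebra. Then (A; *, 0) is a BCK-algebra, i.e., it additionally satisfies ((x*y)*(x*z))*(z*y) = 0 and (x*(x*y))*y = 0 for all x, y, z in A. -/
/-!
The edge condition says that every product `x * y` is either `x` or `0`, and with antisymmetry it
gives `x * 0 = x`. Both BCK identities then reduce to a case check on the values of the products.
Writing `x ≤ y` for `x * y = 0`, transitivity is needed only in the case `x * y = x`, `x ≤ w ≤ y`,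
where it forces `x = 0`.
-/


/-- Let (A; *, 0) be a d-transitive edge d-algebra. Then (A; *, 0) is a
BCK-algebra, i.e., it additionally satisfies ((x*y)*(x*z))*(z*y) = 0 and
(x*(x*y))*y = 0 for all x, y, z. -/
theorem d_transitive_edge_is_BCK {A : Type*} (star : A → A → A) (z : A)
    (hI : ∀ x, star x x = z)
    (hII : ∀ x, star z x = z)
    (hIII : ∀ x y, star x y = z → star y x = z → x = y)
    (htrans : ∀ x y w, star x w = z → star w y = z → star x y = z)
    (hedge : ∀ x, Set.range (star x) = ({x, z} : Set A)) :
    (∀ x y w, star (star (star x y) (star x w)) (star w y) = z) ∧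
    (∀ x y, star (star x (star x y)) y = z) := by
  have hval : ∀ x y, star x y = x ∨ star x y = z := fun x y => by
    have h : star x y ∈ ({x, z} : Set A) := hedge x ▸ Set.mem_range_self y
    simpa using h
  have hzero : ∀ x, star x z = x := fun x => by
    rcases hval x z with h | h
    · exact h
    · rw [h, hIII x z h (hII x)]
  refine ⟨fun x y w => ?_, fun x y => ?_⟩
  · rcases hval x y with hxy | hxy
    · rcases hval x w with hxw | hxw
      · rw [hxy, hxw, hI, hII]
      · rw [hxy, hxw, hzero]
        rcases hval w y with hwy | hwy
        · rw [hwy, hxw]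
        · -- Here `x ≤ w ≤ y`, so transitivity gives `x = x * y = 0`.
          rw [hwy, hzero, ← hxy]
          exact htrans x y w hxw hwy
    · rw [hxy, hII, hII]
  · rcases hval x y with hxy | hxy
    · rw [hxy, hI, hII]
    · rw [hxy, hzero, hxy]
end

section
/- Let ℝ be the set of real numbers with the operation x * y := x·(x − y) (ordinary product and subtraction) and constant 0. Then (ℝ; *, 0) is a d-algebra, but it is not a d*-algebra, since (2*0)*2 ≠ 0. -/
/-- ℝ with x * y := x·(x − y) and constant 0 is a d-algebra, but not a
d*-algebra, since (2*0)*2 ≠ 0. -/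
theorem real_mul_sub_d_algebra_not_d_star :
    let star : ℝ → ℝ → ℝ := fun x y => x * (x - y)
    (∀ x : ℝ, star x x = 0) ∧
    (∀ x : ℝ, star 0 x = 0) ∧
    (∀ x y : ℝ, star x y = 0 → star y x = 0 → x = y) ∧
    ¬ (∀ x y : ℝ, star (star x y) x = 0) ∧
    star (star 2 0) 2 ≠ 0 := by
  intro star
  have h20 : star (star 2 0) 2 ≠ 0 := by norm_num [star]
  refine ⟨fun x => by simp [star], fun x => by simp [star], fun x y hxy hyx => ?_,
    fun h => h20 (h 2 0), h20⟩
  -- Adding `x * (x - y) = 0` and `y * (y - x) = 0` gives `(x - y) ^ 2 = 0`.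
  have hsq : (x - y) ^ 2 = 0 := by
    simp only [star] at hxy hyx
    linear_combination hxy + hyx
  exact sub_eq_zero.mp (pow_eq_zero_iff two_ne_zero |>.mp hsq)
end

section
/- Let (A; *, 0) be a BCK-algebra. Then ⋆ is a total binary operation on the normalizer A^∇: for all (a,b,c), (d,e,f) in A^∇, the triple (a,b,c) ⋆ (d,e,f) = (a*f, b*e, c*d) again lies in A^∇, i.e., (a*f)*(b*e) = 0 and (b*e)*(c*d) = 0. -/
/-!
In a BCK-algebra the relation `x ≤ y`, meaning `x * y = 0`, is a partial order for which `*` is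
monotone in its first argument and antitone in its second; since `x * 0 = x`, transitivity and both
monotonicity facts are read off axiom (V). For `a ≤ b ≤ c` and `d ≤ e ≤ f` this gives
`a * f ≤ b * f ≤ b * e` and `b * e ≤ c * e ≤ c * d`.
-/

/-- The normalizer A^∇ := {(a,b,c) ∈ A³ | a*b = 0 and b*c = 0}. -/
def Nabla {A : Type*} (star : A → A → A) (z : A) : Set (A × A × A) :=
  {p | star p.1 p.2.1 = z ∧ star p.2.1 p.2.2 = z}

/-- The triple operation (a,b,c) ⋆ (d,e,f) := (a*f, b*e, c*d). -/
def tstar {A : Type*} (star : A → A → A) (p q : A × A × A) : A × A × A :=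
  (star p.1 q.2.2, star p.2.1 q.2.1, star p.2.2 q.1)

/-- Let (A; *, 0) be a BCK-algebra. Then ⋆ is a total binary operation
on the normalizer A^∇: for all (a,b,c), (d,e,f) in A^∇,
(a,b,c) ⋆ (d,e,f) = (a*f, b*e, c*d) again lies in A^∇, i.e.,
(a*f)*(b*e) = 0 and (b*e)*(c*d) = 0. -/
theorem BCK_tstar_total {A : Type*} (star : A → A → A) (z : A)
    (hI : ∀ x, star x x = z)
    (hII : ∀ x, star z x = z)
    (hIII : ∀ x y, star x y = z → star y x = z → x = y)
    (hV : ∀ x y w, star (star (star x y) (star x w)) (star w y) = z)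
    (hVI : ∀ x y, star (star x (star x y)) y = z) :
    ∀ p ∈ Nabla star z, ∀ q ∈ Nabla star z, tstar star p q ∈ Nabla star z := by
  -- `x * 0 = x`: axiom (VI) gives `(x * (x * 0)) * 0 = 0`, and `w * 0 = 0` forces `w = 0`.
  have hz : ∀ x, star x z = x := fun x =>
    hIII _ _ (by simpa only [hI] using hVI x x) (hIII _ _ (hVI x z) (hII _))
  -- Writing `x ≤ y` for `x * y = 0`, the three order facts below are all instances of (V).
  have htrans : ∀ x y w, star x y = z → star y w = z → star x w = z := by
    intro x y w hxy hyw
    simpa only [hxy, hyw, hz] using hV x w y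
  have hmono : ∀ x y w, star x y = z → star (star x w) (star y w) = z := by
    intro x y w hxy
    simpa only [hxy, hz] using hV x w y
  have hanti : ∀ x y w, star y w = z → star (star x w) (star x y) = z := by
    intro x y w hyw
    simpa only [hyw, hz] using hV x w y
  rintro ⟨a, b, c⟩ ⟨hab, hbc⟩ ⟨d, e, f⟩ ⟨hde, hef⟩
  exact ⟨htrans _ _ _ (hmono a b f hab) (hanti b e f hef),
    htrans _ _ _ (hmono b c e hbc) (hanti c d e hde)⟩
end

section
/- Let (A; *, 0) be a d-algebra and let (a,b,c), (d,e,f) be elements of the normalizer A^∇. If (a,b,c) ⋆ (d,e,f) = ε(0) and (d,e,f) ⋆ (a,b,c) = ε(0), then (a,b,c) = (d,e,f). -/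
/-- The triple projection ε(x) := (x,x,x). -/
def eps {A : Type*} (x : A) : A × A × A := (x, x, x)

/-- Let (A; *, 0) be a d-algebra and (a,b,c), (d,e,f) ∈ A^∇.
If (a,b,c) ⋆ (d,e,f) = ε(0) and (d,e,f) ⋆ (a,b,c) = ε(0), then (a,b,c) = (d,e,f). -/
theorem tstar_antisymmetric {A : Type*} (star : A → A → A) (z : A)
    (hI : ∀ x, star x x = z)
    (hII : ∀ x, star z x = z)
    (hIII : ∀ x y, star x y = z → star y x = z → x = y) :
    ∀ p ∈ Nabla star z, ∀ q ∈ Nabla star z,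
      tstar star p q = eps z → tstar star q p = eps z → p = q := by
  rintro ⟨a, b, c⟩ ⟨hab, hbc⟩ ⟨d, e, f⟩ ⟨hde, hef⟩ h₁ h₂
  simp only [tstar, eps, Prod.mk.injEq] at h₁ h₂ hab hbc hde hef
  obtain ⟨haf, hbe, hcd⟩ := h₁
  obtain ⟨hdc, heb, hfa⟩ := h₂
  -- Axiom (III) gives `f = a`, `e = b`, `d = c`, so `q` is the reversal of `p`.
  obtain rfl := hIII a f haf hfa
  obtain rfl := hIII b e hbe heb
  obtain rfl := hIII c d hcd hdc
  -- Both `p` and its reversal lie in the normalizer, which forces `a = b = c`.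
  obtain rfl := hIII a b hab hef
  obtain rfl := hIII a c hbc hde
  rfl
end

section
/- Let (A; *, 0) be an edge d-algebra and let (a,b,c), (d,e,f) in A^∇ be such that (a,b,c) ⋆ (d,e,f) lies in A^∇ (i.e., (a*f)*(b*e) = 0 and (b*e)*(c*d) = 0). Then (a,b,c) ⋆ (d,e,f) = ε(0) if and only if c*d = 0. -/
/-- Let (A; *, 0) be an edge d-algebra and (a,b,c), (d,e,f) ∈ A^∇
be such that (a,b,c) ⋆ (d,e,f) lies in A^∇. Then
(a,b,c) ⋆ (d,e,f) = ε(0) if and only if c*d = 0. -/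
theorem edge_tstar_eq_eps_zero_iff {A : Type*} (star : A → A → A) (z : A)
    (hI : ∀ x, star x x = z)
    (hII : ∀ x, star z x = z)
    (hIII : ∀ x y, star x y = z → star y x = z → x = y)
    (hedge : ∀ x, Set.range (star x) = ({x, z} : Set A)) :
    ∀ p ∈ Nabla star z, ∀ q ∈ Nabla star z, tstar star p q ∈ Nabla star z →
      (tstar star p q = eps z ↔ star p.2.2 q.1 = z) := by
  rintro ⟨a, b, c⟩ - ⟨d, e, f⟩ - ⟨h₁, h₂⟩
  simp only [tstar, eps, Prod.mk.injEq] at h₁ h₂ ⊢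
  refine ⟨fun h => h.2.2, fun h => ?_⟩
  -- Since `0 * x = 0`, antisymmetry (III) turns `x * 0 = 0` into `x = 0`;
  -- the vanishing of `c * d` thus propagates to `b * e` and then to `a * f`.
  have hbe : star b e = z := hIII _ _ (h ▸ h₂) (hII _)
  have haf : star a f = z := hIII _ _ (hbe ▸ h₁) (hII _)
  exact ⟨haf, hbe, h⟩
end

section
/- Let (A; *, 0) be a d-transitive d-algebra and (a,b,c) ∈ A^∇. Then the diameter d(a,b,c) = c*a equals 0 if and only if (a,b,c) = ε(a), i.e., a = b = c. -/
/-- Let (A; *, 0) be a d-transitive d-algebra and (a,b,c) ∈ A^∇.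
Then the diameter d(a,b,c) = c*a equals 0 if and only if (a,b,c) = ε(a). -/
theorem d_transitive_diameter_zero_iff {A : Type*} (star : A → A → A) (z : A)
    (hI : ∀ x, star x x = z)
    (hII : ∀ x, star z x = z)
    (hIII : ∀ x y, star x y = z → star y x = z → x = y)
    (htrans : ∀ x y w, star x w = z → star w y = z → star x y = z) :
    ∀ p ∈ Nabla star z, (star p.2.2 p.1 = z ↔ p = eps p.1) := by
  rintro ⟨a, b, c⟩ ⟨hab, hbc⟩
  simp only [eps, Prod.mk.injEq, true_and] at *
  constructor
  · intro hca
    -- `x * y = 0` is a partial order, so the cycle `a ≤ b ≤ c ≤ a` collapses.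
    have hac : a = c := hIII a c (htrans a c b hab hbc) hca
    subst hac
    exact ⟨hIII b a hbc hab, rfl⟩
  · rintro ⟨_, rfl⟩
    exact hI c
end

section
/- Let (A; *, 0) be a d-transitive d-algebra. Then the relation < on A^∇, defined by u < v iff u ≠ v and u ⋆ v = ε(0), is transitive: if u < v and v < w, then u < w. -/
/-- Let (A; *, 0) be a d-transitive d-algebra. Then the relation <
on A^∇, defined by u < v iff u ≠ v and u ⋆ v = ε(0), is transitive. -/
theorem d_transitive_lt_trans {A : Type*} (star : A → A → A) (z : A)
    (hI : ∀ x, star x x = z)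
    (hII : ∀ x, star z x = z)
    (hIII : ∀ x y, star x y = z → star y x = z → x = y)
    (htrans : ∀ x y w, star x w = z → star w y = z → star x y = z) :
    ∀ u ∈ Nabla star z, ∀ v ∈ Nabla star z, ∀ w ∈ Nabla star z,
      (u ≠ v ∧ tstar star u v = eps z) → (v ≠ w ∧ tstar star v w = eps z) →
      (u ≠ w ∧ tstar star u w = eps z) := by
  rintro ⟨a, b, c⟩ ⟨hab, hbc⟩ ⟨d, e, f⟩ ⟨hde, hef⟩ ⟨g, h, i⟩ ⟨hgh, hhi⟩ ⟨huv, h1⟩ ⟨-, h2⟩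
  simp only [tstar, eps, ne_eq, Prod.mk.injEq] at huv h1 h2 ⊢
  obtain ⟨-, -, hcd⟩ := h1
  obtain ⟨-, -, hfg⟩ := h2
  have T : ∀ {x w y}, star x w = z → star w y = z → star x y = z := fun {x w y} => htrans x y w
  have hdf := T hde hef
  have hcg := T (T hcd hdf) hfg
  refine ⟨?_, T (T (T hab hbc) hcg) (T hgh hhi), T (T hbc hcg) hgh, hcg⟩
  rintro ⟨rfl, rfl, rfl⟩
  -- Now `c ≤ d ≤ e ≤ f ≤ a ≤ b ≤ c` is a cycle, so all six entries coincide and `u = v`.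
  have hfc := T (T hfg hab) hbc
  have hac := hIII a c (T hab hbc) hcg
  have hbc' := hIII b c hbc (T hcg hab)
  have hcd' := hIII c d hcd (T hdf hfc)
  have hce' := hIII c e (T hcd hde) (T hef hfc)
  have hcf' := hIII c f (T hcd hdf) hfc
  exact huv ⟨hac.trans hcd', hbc'.trans hce', hcf'⟩
end
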